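/- In ℝ³, for the i-th divergence-free Gaussian field g_i = (4π)^{-3/2}(1+εt)^{-3/2} ∇×(e^{-|x|²/(4(1+εt))} e_i), the field V_i := (4π)^{-3/2}(1+εt)^{-3/2}[e^{-|x|²/(4(1+εt))} e_i - ∂_{x_i}∇(Δ^{-1} e^{-|x|²/(4(1+εt))})] satisfies ∇×V_i = g_i and ∇·V_i = 0; moreover Δ^{-1}e^{-|x|²/(4λ)} has radial derivative ∂_r u = -(2λ/r)e^{-r²/(4λ)} + (2λ/r²)∫₀^r e^{-z²/(4λ)}dz (with λ = 1+εt). -/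

import Mathlib

open MeasureTheory Real intervalIntegral

noncomputable section

/-- Directional partial derivative in the `i`-th coordinate direction. -/
def pd (i : Fin 3) (f : EuclideanSpace ℝ (Fin 3) → ℝ) :
    EuclideanSpace ℝ (Fin 3) → ℝ :=
  fun x => fderiv ℝ f x (EuclideanSpace.single i 1)

/-- A vector in ℝ³ from its three components. -/
def vec3 (a b c : ℝ) : EuclideanSpace ℝ (Fin 3) :=
  (WithLp.equiv 2 (Fin 3 → ℝ)).symm ![a, b, c]

/-- The curl of a vector field on ℝ³. -/
def curl3 (v : EuclideanSpace ℝ (Fin 3) → EuclideanSpace ℝ (Fin 3))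
    (x : EuclideanSpace ℝ (Fin 3)) : EuclideanSpace ℝ (Fin 3) :=
  vec3 (pd 1 (fun y => v y 2) x - pd 2 (fun y => v y 1) x)
       (pd 2 (fun y => v y 0) x - pd 0 (fun y => v y 2) x)
       (pd 0 (fun y => v y 1) x - pd 1 (fun y => v y 0) x)

/-- The inverse Laplacian on ℝ³, given by convolution with `-1/(4π|x|)`. -/
def invLap (f : EuclideanSpace ℝ (Fin 3) → ℝ) (x : EuclideanSpace ℝ (Fin 3)) : ℝ :=
  -(1 / (4 * π)) * ∫ y, f y / ‖x - y‖

/-- The Gaussian `e^{-|x|²/(4λ)}` with `λ = 1 + εt`. -/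
def gaussL (lam : ℝ) (x : EuclideanSpace ℝ (Fin 3)) : ℝ :=
  exp (-‖x‖ ^ 2 / (4 * lam))

/-- The Biot–Savart potential field
`V_i = (4π)^{-3/2}λ^{-3/2}[e^{-|x|²/(4λ)}e_i - ∂_{x_i}∇(Δ^{-1}e^{-|x|²/(4λ)})]`. -/
def biotV (lam : ℝ) (i : Fin 3) (x : EuclideanSpace ℝ (Fin 3)) :
    EuclideanSpace ℝ (Fin 3) :=
  ((4 * π) ^ (-(3 : ℝ) / 2) * lam ^ (-(3 : ℝ) / 2)) •
    (gaussL lam x • EuclideanSpace.single i 1 -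
      vec3 (pd i (pd 0 (invLap (gaussL lam))) x)
           (pd i (pd 1 (invLap (gaussL lam))) x)
           (pd i (pd 2 (invLap (gaussL lam))) x))

/-!
The substitution `1 / |x - y| = (2 / √π) ∫₀^∞ exp (-s²|x - y|²) ds` turns the Newton potential of a
Gaussian into a superposition of Gaussian convolutions, and `w = s / √(a + s²)` maps the remaining
integral over `s` to the Boys function `F₀`; hence `Δ⁻¹ e^{-|x|²/(4λ)} = -2λ F₀(|x|²/(4λ))`.
Since `Fₙ' = -Fₙ₊₁` and `(2n + 1) Fₙ(q) = 2q Fₙ₊₁(q) + e^{-q}`, this potential `u` is smooth,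
satisfies `Δu = e^{-|x|²/(4λ)}`, and has the stated radial derivative. The identities for `V_i`,
a multiple of `Δu e_i - ∇∂_i u`, are then `∇× ∇ = 0` and `∇·∇∂_i u = ∂_i Δu`.
-/

open scoped ContDiff Gradient InnerProductSpace Laplacian

local notation "ℝ³" => EuclideanSpace ℝ (Fin 3)

/-! ### Vector calculus on `ℝ³` -/

/-- The divergence of a vector field on ℝ³, as the trace of its matrix of partial derivatives. -/
def div3 (v : ℝ³ → ℝ³) (x : ℝ³) : ℝ :=
  ∑ j, pd j (fun y => v y j) x

section VectorCalculus

variable {f g u : ℝ³ → ℝ} {v w : ℝ³ → ℝ³} {x : ℝ³}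

lemma pd_sub (hf : DifferentiableAt ℝ f x) (hg : DifferentiableAt ℝ g x) (j : Fin 3) :
    pd j (fun y => f y - g y) x = pd j f x - pd j g x := by
  simp only [pd, fderiv_fun_sub hf hg, sub_apply]

lemma pd_const_mul (c : ℝ) (f : ℝ³ → ℝ) (j : Fin 3) (x : ℝ³) :
    pd j (fun y => c * f y) x = c * pd j f x :=
  congrArg (· (EuclideanSpace.single j 1))
    (congrFun (fderiv_const_smul_field (𝕜 := ℝ) (f := f) c) x)

lemma pd_mul_const (f : ℝ³ → ℝ) (c : ℝ) (j : Fin 3) (x : ℝ³) :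
    pd j (fun y => f y * c) x = pd j f x * c := by
  simp only [mul_comm _ c, pd_const_mul]

lemma pd_coord_mul (hg : DifferentiableAt ℝ g x) (j : Fin 3) :
    pd j (fun y => y j * g y) x = g x + x j * pd j g x := by
  have hcoord : HasFDerivAt (fun y : ℝ³ => y j) (EuclideanSpace.proj j : ℝ³ →L[ℝ] ℝ) x :=
    (EuclideanSpace.proj j : ℝ³ →L[ℝ] ℝ).hasFDerivAt
  have hprod : fderiv ℝ (fun y => y j * g y) x = _ := (hcoord.mul hg.hasFDerivAt).fderiv
  simp [pd, hprod, add_comm]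

lemma pd_comp_norm_sq {φ : ℝ → ℝ} {φ' : ℝ} (hφ : HasDerivAt φ φ' (‖x‖ ^ 2)) (j : Fin 3) :
    pd j (fun y => φ (‖y‖ ^ 2)) x = 2 * x j * φ' := by
  have hcomp : fderiv ℝ (fun y : ℝ³ => φ (‖y‖ ^ 2)) x = _ :=
    (hφ.comp_hasFDerivAt x (hasStrictFDerivAt_norm_sq x).hasFDerivAt).fderiv
  simp only [pd, hcomp, smul_apply, coe_innerSL_apply, EuclideanSpace.inner_single_right,
    ringHom_apply, one_mul, nsmul_eq_mul, Nat.cast_ofNat, smul_eq_mul]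
  ring

lemma contDiff_pd {m n : ℕ∞ω} (hf : ContDiff ℝ n f) (hmn : m + 1 ≤ n) (j : Fin 3) :
    ContDiff ℝ m (pd j f) :=
  (hf.fderiv_right hmn).clm_apply contDiff_const

lemma pd_pd_eq_fderiv_fderiv (hf : ContDiff ℝ 2 f) (i j : Fin 3) (x : ℝ³) :
    pd i (pd j f) x =
      fderiv ℝ (fderiv ℝ f) x (EuclideanSpace.single i 1) (EuclideanSpace.single j 1) := by
  have hf' : DifferentiableAt ℝ (fderiv ℝ f) x :=
    (hf.fderiv_right (m := 1) le_rfl).differentiable one_ne_zero x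
  unfold pd
  rw [fderiv_clm_apply hf' (differentiableAt_const _)]
  simp

lemma pd_comm (hf : ContDiff ℝ 2 f) (i j : Fin 3) : pd i (pd j f) = pd j (pd i f) := by
  funext x
  rw [pd_pd_eq_fderiv_fderiv hf, pd_pd_eq_fderiv_fderiv hf]
  exact hf.contDiffAt.isSymmSndFDerivAt (by simp) _ _

lemma gradient_apply (f : ℝ³ → ℝ) (x : ℝ³) (j : Fin 3) : ∇ f x j = pd j f x := by
  rw [pd, ← toDual_gradient, InnerProductSpace.toDual_apply_apply]
  simp only [EuclideanSpace.inner_single_right, one_mul, conj_trivial]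

lemma differentiable_gradient (hu : ContDiff ℝ 2 u) : Differentiable ℝ (∇ u) := by
  refine differentiable_euclidean.2 fun j => ?_
  simp only [gradient_apply]
  exact (contDiff_pd (m := 1) hu le_rfl j).differentiable one_ne_zero

lemma laplacian_eq_sum_pd_pd (hu : ContDiff ℝ 2 u) (x : ℝ³) : Δ u x = ∑ j, pd j (pd j u) x := by
  simp [InnerProductSpace.laplacian_eq_iteratedFDeriv_orthonormalBasis u
    (EuclideanSpace.basisFun (Fin 3) ℝ), iteratedFDeriv_two_apply, pd_pd_eq_fderiv_fderiv hu]

lemma laplacian_pd (hu : ContDiff ℝ 3 u) (i : Fin 3) (x : ℝ³) : Δ (pd i u) x = pd i (Δ u) x := by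
  have hu₂ : ContDiff ℝ 2 u := hu.of_le (by norm_num)
  have hpd : ∀ j, ContDiff ℝ 2 (pd j u) := contDiff_pd hu (by norm_num)
  have hpdpd : ∀ j, DifferentiableAt ℝ (pd j (pd j u)) x := fun j =>
    (contDiff_pd (m := 1) (hpd j) le_rfl j).differentiable one_ne_zero x
  calc Δ (pd i u) x = ∑ j, pd j (pd j (pd i u)) x := laplacian_eq_sum_pd_pd (hpd i) x
    _ = ∑ j, pd i (pd j (pd j u)) x := by
      refine Finset.sum_congr rfl fun j _ => ?_
      rw [pd_comm hu₂ j i, pd_comm (hpd j) j i]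
    _ = pd i (fun y => ∑ j, pd j (pd j u) y) x := by
      simp [pd.eq_1 i, fderiv_fun_sum fun j _ => hpdpd j]
    _ = pd i (Δ u) x := by simp_rw [← laplacian_eq_sum_pd_pd hu₂]

lemma curl3_const_smul (c : ℝ) (v : ℝ³ → ℝ³) (x : ℝ³) :
    curl3 (fun y => c • v y) x = c • curl3 v x := by
  ext k
  fin_cases k <;> simp [curl3, vec3, pd_const_mul, mul_sub]

lemma curl3_sub (hv : DifferentiableAt ℝ v x) (hw : DifferentiableAt ℝ w x) :
    curl3 (fun y => v y - w y) x = curl3 v x - curl3 w x := by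
  have hcoord : ∀ j k, pd j (fun y => v y k - w y k) x =
      pd j (fun y => v y k) x - pd j (fun y => w y k) x := fun j k =>
    pd_sub (differentiableAt_euclidean.1 hv k) (differentiableAt_euclidean.1 hw k) j
  ext k
  fin_cases k <;> simp [curl3, vec3, hcoord] <;> ring

lemma curl3_gradient (hu : ContDiff ℝ 2 u) (x : ℝ³) : curl3 (∇ u) x = 0 := by
  ext k
  simp only [curl3, gradient_apply, pd_comm hu 2 1, pd_comm hu 2 0, pd_comm hu 1 0, sub_self]
  fin_cases k <;> simp [vec3]

lemma div3_const_smul (c : ℝ) (v : ℝ³ → ℝ³) (x : ℝ³) :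
    div3 (fun y => c • v y) x = c * div3 v x := by
  simp [div3, pd_const_mul, Finset.mul_sum]

lemma div3_sub (hv : DifferentiableAt ℝ v x) (hw : DifferentiableAt ℝ w x) :
    div3 (fun y => v y - w y) x = div3 v x - div3 w x := by
  simp only [div3, PiLp.sub_apply, ← Finset.sum_sub_distrib]
  exact Finset.sum_congr rfl fun j _ =>
    pd_sub (differentiableAt_euclidean.1 hv j) (differentiableAt_euclidean.1 hw j) j

lemma div3_smul_const (f : ℝ³ → ℝ) (c x : ℝ³) :
    div3 (fun y => f y • c) x = ∑ j, pd j f x * c j := by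
  simp [div3, pd_mul_const]

lemma div3_gradient (hu : ContDiff ℝ 2 u) (x : ℝ³) : div3 (∇ u) x = Δ u x := by
  simp only [div3, gradient_apply, laplacian_eq_sum_pd_pd hu]

end VectorCalculus

/-! ### The Boys function -/

/-- The Boys function `Fₙ(q) = ∫₀¹ w²ⁿ exp (-q w²) dw`, which expresses the Newton potential of a
Gaussian and its derivatives. -/
def boys (n : ℕ) (q : ℝ) : ℝ :=
  ∫ w in (0 : ℝ)..1, w ^ (2 * n) * exp (-q * w ^ 2)

-- `F₀` is the moment generating function of `w ↦ w²` on `[0, 1]`, evaluated at `-q`.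
lemma hasDerivAt_boys (n : ℕ) (q : ℝ) : HasDerivAt (boys n) (-boys (n + 1) q) q := by
  let μ : Measure ℝ := volume.restrict (Set.Ioc 0 1)
  have hbdd : ∀ᵐ w ∂μ, w ^ 2 ∈ Set.Icc (0 : ℝ) 1 :=
    (ae_restrict_iff' measurableSet_Ioc).2 <| .of_forall fun w hw =>
      ⟨sq_nonneg w, pow_le_one₀ hw.1.le hw.2⟩
  have huniv : ProbabilityTheory.integrableExpSet (· ^ 2) μ = Set.univ :=
    Set.eq_univ_of_forall fun t =>
      ProbabilityTheory.integrable_exp_mul_of_mem_Icc (by fun_prop) hbdd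
  have hmoment : boys = fun n q => ∫ w, (w ^ 2) ^ n * exp (-q * w ^ 2) ∂μ := by
    funext n q
    simp only [boys, intervalIntegral.integral_of_le zero_le_one, pow_mul, μ]
  have hmgf := ProbabilityTheory.hasDerivAt_integral_pow_mul_exp_real (t := -q)
    (X := (· ^ 2)) (μ := μ) (by simp [huniv]) n
  simpa [hmoment, Function.comp_def] using hmgf.comp q (hasDerivAt_neg q)

lemma contDiff_boys (n : ℕ) : ContDiff ℝ ∞ (boys n) := by
  refine contDiff_infty.2 fun m => ?_
  induction m generalizing n with
  | zero =>
    exact contDiff_zero.2 <| continuous_iff_continuousAt.2 fun q =>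
      (hasDerivAt_boys n q).continuousAt
  | succ m ih =>
    rw [Nat.cast_succ, contDiff_succ_iff_deriv]
    refine ⟨fun q => (hasDerivAt_boys n q).differentiableAt, by simp, ?_⟩
    rw [funext fun q => (hasDerivAt_boys n q).deriv]
    exact (ih (n + 1)).neg

-- Integrate the derivative of `w ^ (2n + 1) * exp (-q w²)` over `[0, 1]`.
lemma boys_recurrence (n : ℕ) (q : ℝ) :
    (2 * n + 1) * boys n q = 2 * q * boys (n + 1) q + exp (-q) := by
  have hderiv : ∀ w : ℝ, HasDerivAt (fun w => w ^ (2 * n + 1) * exp (-q * w ^ 2))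
      ((2 * n + 1) * (w ^ (2 * n) * exp (-q * w ^ 2))
        - 2 * q * (w ^ (2 * (n + 1)) * exp (-q * w ^ 2))) w := fun w => by
    refine ((hasDerivAt_pow (2 * n + 1) w).mul
      ((hasDerivAt_pow 2 w).const_mul (-q)).exp).congr_deriv ?_
    simp only [Nat.cast_add, Nat.cast_mul, Nat.cast_ofNat, Nat.cast_one, add_tsub_cancel_right,
      neg_mul, Nat.add_one_sub_one, pow_one, mul_neg]
    ring
  have hint : ∀ c : ℝ, ∀ k : ℕ,
      IntervalIntegrable (fun w => c * (w ^ k * exp (-q * w ^ 2))) volume 0 1 := fun c k =>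
    (by fun_prop : Continuous fun w : ℝ => c * (w ^ k * exp (-q * w ^ 2))).intervalIntegrable _ _
  have hftc := integral_eq_sub_of_hasDerivAt (fun w _ => hderiv w) ((hint _ _).sub (hint _ _))
  rw [intervalIntegral.integral_sub (hint _ _) (hint _ _), intervalIntegral.integral_const_mul,
    intervalIntegral.integral_const_mul] at hftc
  have hvalue : (2 * n + 1) * boys n q - 2 * q * boys (n + 1) q = exp (-q) := by
    simpa [boys] using hftc
  linarith

lemma mul_boys_zero_mul_sq (c r : ℝ) :
    r * boys 0 (c * r ^ 2) = ∫ z in (0 : ℝ)..r, exp (-c * z ^ 2) := by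
  have hscale := intervalIntegral.mul_integral_comp_mul_left
    (f := fun z => exp (-c * z ^ 2)) (a := 0) (b := 1) r
  rw [mul_zero, mul_one] at hscale
  rw [← hscale, boys]
  simp only [mul_zero, pow_zero, one_mul, mul_pow, neg_mul, mul_assoc]

/-! ### The Newton potential of a Gaussian -/

section NewtonPotential

lemma hasDerivAt_div_sqrt_add_sq {a : ℝ} (ha : 0 < a) (s : ℝ) :
    HasDerivAt (fun s => s / √(a + s ^ 2)) (a / √(a + s ^ 2) ^ 3) s := by
  have hpos : 0 < a + s ^ 2 := by positivity
  have hsqrt : HasDerivAt (fun s => √(a + s ^ 2)) (s / √(a + s ^ 2)) s := by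
    refine (((hasDerivAt_pow 2 s).const_add a).sqrt hpos.ne').congr_deriv ?_
    field_simp
    simp
  refine ((hasDerivAt_id s).div hsqrt (by positivity)).congr_deriv ?_
  have hsq : √(a + s ^ 2) ^ 2 = a + s ^ 2 := sq_sqrt hpos.le
  simp only [id]
  field_simp
  rw [hsq]
  ring

lemma tendsto_div_sqrt_add_sq_atTop (a : ℝ) :
    Filter.Tendsto (fun s => s / √(a + s ^ 2)) Filter.atTop (nhds 1) := by
  have hlim : Filter.Tendsto (fun s : ℝ => (√(a / s ^ 2 + 1))⁻¹) Filter.atTop (nhds 1) := by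
    have h := ((Filter.tendsto_pow_atTop two_ne_zero).const_div_atTop a).add_const (1 : ℝ)
    simpa using h.sqrt.inv₀ (by simp)
  refine hlim.congr' ?_
  filter_upwards [Filter.eventually_gt_atTop 0] with s hs
  have hfactor : a + s ^ 2 = s ^ 2 * (a / s ^ 2 + 1) := by field_simp
  rw [hfactor, sqrt_mul (sq_nonneg s), sqrt_sq hs.le, div_mul_eq_div_div, div_self hs.ne', one_div]

lemma hasDerivAt_integral_exp_neg_mul_sq (q W : ℝ) :
    HasDerivAt (fun W => ∫ w in (0 : ℝ)..W, exp (-q * w ^ 2)) (exp (-q * W ^ 2)) W :=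
  have hcont : Continuous fun w : ℝ => exp (-q * w ^ 2) := by fun_prop
  (hcont.integral_hasStrictDerivAt 0 W).hasDerivAt

-- The substitution `w = s / √(a + s²)`, carried out on primitives.
lemma hasDerivAt_integral_exp_neg_mul_sq_comp {a : ℝ} (ha : 0 < a) (q s : ℝ) :
    HasDerivAt (fun s => ∫ w in (0 : ℝ)..s / √(a + s ^ 2), exp (-q * w ^ 2))
      (a / √(a + s ^ 2) ^ 3 * exp (-q * (s / √(a + s ^ 2)) ^ 2)) s :=
  ((hasDerivAt_integral_exp_neg_mul_sq q _).comp s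
    (hasDerivAt_div_sqrt_add_sq ha s)).congr_deriv (mul_comm _ _)

lemma tendsto_integral_exp_neg_mul_sq_comp (a q : ℝ) :
    Filter.Tendsto (fun s => ∫ w in (0 : ℝ)..s / √(a + s ^ 2), exp (-q * w ^ 2)) Filter.atTop
      (nhds (boys 0 q)) := by
  have hboys : boys 0 q = ∫ w in (0 : ℝ)..1, exp (-q * w ^ 2) := by simp [boys]
  rw [hboys]
  exact (hasDerivAt_integral_exp_neg_mul_sq q 1).continuousAt.tendsto.comp
    (tendsto_div_sqrt_add_sq_atTop a)

lemma integrableOn_Ioi_boys_zero_integrand {a : ℝ} (ha : 0 < a) (q : ℝ) :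
    IntegrableOn (fun s => a / √(a + s ^ 2) ^ 3 * exp (-q * (s / √(a + s ^ 2)) ^ 2)) (Set.Ioi 0) :=
  integrableOn_Ioi_deriv_of_nonneg' (fun s _ => hasDerivAt_integral_exp_neg_mul_sq_comp ha q s)
    (fun _ _ => by positivity) (tendsto_integral_exp_neg_mul_sq_comp a q)

lemma integral_Ioi_boys_zero_integrand {a : ℝ} (ha : 0 < a) (q : ℝ) :
    ∫ s in Set.Ioi 0, a / √(a + s ^ 2) ^ 3 * exp (-q * (s / √(a + s ^ 2)) ^ 2) = boys 0 q := by
  rw [integral_Ioi_of_hasDerivAt_of_nonneg'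
    (fun s _ => hasDerivAt_integral_exp_neg_mul_sq_comp ha q s)
    (fun _ _ => by positivity) (tendsto_integral_exp_neg_mul_sq_comp a q)]
  simp

variable {V : Type*} [NormedAddCommGroup V] [InnerProductSpace ℝ V] [FiniteDimensional ℝ V]
  [MeasurableSpace V] [BorelSpace V]

lemma integral_exp_neg_norm_sq_mul_exp_neg_norm_sub_sq {a b : ℝ} (hab : 0 < a + b) (x : V) :
    ∫ y : V, exp (-a * ‖y‖ ^ 2) * exp (-b * ‖x - y‖ ^ 2) =
      (π / (a + b)) ^ (Module.finrank ℝ V / 2 : ℝ) * exp (-(a * b / (a + b)) * ‖x‖ ^ 2) := by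
  have hsquare : ∀ y : V, exp (-a * ‖y‖ ^ 2) * exp (-b * ‖x - y‖ ^ 2) =
      exp (-(a * b / (a + b)) * ‖x‖ ^ 2) * exp (-(a + b) * ‖y - (b / (a + b)) • x‖ ^ 2) := by
    intro y
    rw [← exp_add, ← exp_add, norm_sub_sq_real, norm_sub_sq_real, inner_smul_right, norm_smul,
      real_inner_comm x y, norm_eq_abs, mul_pow, sq_abs]
    congr 1
    field_simp
    ring
  simp_rw [hsquare]
  rw [MeasureTheory.integral_const_mul,
    integral_sub_right_eq_self fun y : V => exp (-(a + b) * ‖y‖ ^ 2),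
    GaussianFourier.integral_rexp_neg_mul_sq_norm hab, mul_comm]

-- Also true at `c = 0`, where the divergent integral and the quotient are both `0`.
lemma integral_Ioi_exp_neg_sq_mul_sq {c : ℝ} (hc : 0 ≤ c) :
    ∫ s in Set.Ioi (0 : ℝ), exp (-s ^ 2 * c ^ 2) = √π / 2 / c := by
  simp_rw [neg_mul, mul_comm _ (c ^ 2), ← neg_mul]
  rw [integral_gaussian_Ioi, sqrt_div pi_pos.le, sqrt_sq hc, div_right_comm]

lemma integral_exp_neg_norm_sq_mul_exp_neg_sq_mul_norm_sub_sq (hV : Module.finrank ℝ V = 3)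
    {a : ℝ} (ha : 0 < a) (s : ℝ) (x : V) :
    ∫ y : V, exp (-a * ‖y‖ ^ 2) * exp (-s ^ 2 * ‖x - y‖ ^ 2) =
      √π ^ 3 / a *
        (a / √(a + s ^ 2) ^ 3 * exp (-(a * ‖x‖ ^ 2) * (s / √(a + s ^ 2)) ^ 2)) := by
  have hpos : 0 < a + s ^ 2 := by positivity
  rw [integral_exp_neg_norm_sq_mul_exp_neg_norm_sub_sq hpos, hV, div_pow, sq_sqrt hpos.le,
    Nat.cast_ofNat, rpow_div_two_eq_sqrt _ (by positivity), sqrt_div pi_pos.le,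
    rpow_ofNat, div_pow]
  field_simp

lemma integrable_exp_neg_norm_sq_mul_exp_neg_sq_mul_norm_sub_sq (hV : Module.finrank ℝ V = 3)
    {a : ℝ} (ha : 0 < a) (x : V) :
    Integrable (fun p : V × ℝ => exp (-a * ‖p.1‖ ^ 2) * exp (-p.2 ^ 2 * ‖x - p.1‖ ^ 2))
      (volume.prod (volume.restrict (Set.Ioi 0))) := by
  have hmeas : Measurable fun p : V × ℝ =>
      exp (-a * ‖p.1‖ ^ 2) * exp (-p.2 ^ 2 * ‖x - p.1‖ ^ 2) := by fun_prop
  have hspace := integral_exp_neg_norm_sq_mul_exp_neg_sq_mul_norm_sub_sq hV ha (x := x)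
  refine (integrable_prod_iff' hmeas.aestronglyMeasurable).2 ⟨.of_forall fun s => ?_, ?_⟩
  · refine .of_integral_ne_zero ?_
    rw [hspace]
    positivity
  · simp only [norm_mul, norm_of_nonneg (exp_nonneg _), hspace]
    exact (integrableOn_Ioi_boys_zero_integrand ha _).const_mul _

lemma integral_exp_neg_norm_sq_div_norm_sub (hV : Module.finrank ℝ V = 3) {a : ℝ} (ha : 0 < a)
    (x : V) :
    ∫ y : V, exp (-a * ‖y‖ ^ 2) / ‖x - y‖ = 2 * π / a * boys 0 (a * ‖x‖ ^ 2) := by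
  have hswap : √π / 2 * ∫ y, exp (-a * ‖y‖ ^ 2) / ‖x - y‖ =
      √π ^ 3 / a * boys 0 (a * ‖x‖ ^ 2) := by
    calc √π / 2 * ∫ y, exp (-a * ‖y‖ ^ 2) / ‖x - y‖
        = ∫ y, ∫ s in Set.Ioi 0, exp (-a * ‖y‖ ^ 2) * exp (-s ^ 2 * ‖x - y‖ ^ 2) := by
          simp only [MeasureTheory.integral_const_mul,
            integral_Ioi_exp_neg_sq_mul_sq (norm_nonneg _)]
          rw [← MeasureTheory.integral_const_mul]
          congr 1 with y
          ring
      _ = ∫ s in Set.Ioi 0, ∫ y, exp (-a * ‖y‖ ^ 2) * exp (-s ^ 2 * ‖x - y‖ ^ 2) :=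
          integral_integral_swap (integrable_exp_neg_norm_sq_mul_exp_neg_sq_mul_norm_sub_sq hV ha x)
      _ = √π ^ 3 / a * boys 0 (a * ‖x‖ ^ 2) := by
          simp only [integral_exp_neg_norm_sq_mul_exp_neg_sq_mul_norm_sub_sq hV ha,
            MeasureTheory.integral_const_mul, integral_Ioi_boys_zero_integrand ha]
  have hpi : √π ^ 3 = √π * π := by rw [pow_succ', sq_sqrt pi_pos.le]
  refine mul_left_cancel₀ (by positivity : √π / 2 ≠ 0) (hswap.trans ?_)
  rw [hpi]
  ring

end NewtonPotential

/-! ### The inverse Laplacian of the Gaussian and the Biot–Savart field -/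

section BiotSavart

variable {lam : ℝ}

lemma contDiff_gaussL (lam : ℝ) : ContDiff ℝ ∞ (gaussL lam) :=
  ((contDiff_norm_sq ℝ).neg.div_const _).exp

lemma invLap_gaussL (hlam : 0 < lam) :
    invLap (gaussL lam) = fun x => -(2 * lam) * boys 0 (‖x‖ ^ 2 / (4 * lam)) := by
  funext x
  have hpotential := integral_exp_neg_norm_sq_div_norm_sub (V := ℝ³) (by simp)
    (inv_pos.2 (by positivity : 0 < 4 * lam)) x
  simp only [neg_mul, inv_mul_eq_div, ← neg_div] at hpotential
  simp only [invLap, gaussL, hpotential]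
  field_simp

lemma contDiff_invLap_gaussL (hlam : 0 < lam) : ContDiff ℝ ∞ (invLap (gaussL lam)) := by
  rw [invLap_gaussL hlam]
  exact contDiff_const.mul ((contDiff_boys 0).comp ((contDiff_norm_sq ℝ).div_const _))

lemma pd_boys_norm_sq_div (n : ℕ) (lam : ℝ) (x : ℝ³) (j : Fin 3) :
    pd j (fun y => boys n (‖y‖ ^ 2 / (4 * lam))) x =
      -(x j / (2 * lam)) * boys (n + 1) (‖x‖ ^ 2 / (4 * lam)) := by
  have hboys : HasDerivAt (fun q => boys n (q / (4 * lam)))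
      (-boys (n + 1) (‖x‖ ^ 2 / (4 * lam)) * (1 / (4 * lam))) (‖x‖ ^ 2) :=
    (hasDerivAt_boys n _).comp _ ((hasDerivAt_id _).div_const _)
  rw [pd_comp_norm_sq hboys]
  ring

lemma pd_invLap_gaussL (hlam : 0 < lam) (x : ℝ³) (j : Fin 3) :
    pd j (invLap (gaussL lam)) x = x j * boys 1 (‖x‖ ^ 2 / (4 * lam)) := by
  rw [invLap_gaussL hlam, pd_const_mul, pd_boys_norm_sq_div]
  field_simp

theorem laplacian_invLap_gaussL (hlam : 0 < lam) : Δ (invLap (gaussL lam)) = gaussL lam := by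
  funext x
  set q := ‖x‖ ^ 2 / (4 * lam) with hq
  have hdiff : DifferentiableAt ℝ (fun y : ℝ³ => boys 1 (‖y‖ ^ 2 / (4 * lam))) x :=
    ((contDiff_boys 1).comp ((contDiff_norm_sq ℝ).div_const _)).differentiable (by simp) x
  have hsecond : ∀ j, pd j (pd j (invLap (gaussL lam))) x =
      boys 1 q - x j ^ 2 / (2 * lam) * boys 2 q := fun j => by
    rw [funext fun y => pd_invLap_gaussL hlam y j, pd_coord_mul hdiff, pd_boys_norm_sq_div]
    ring
  calc Δ (invLap (gaussL lam)) x
      = ∑ j, (boys 1 q - x j ^ 2 / (2 * lam) * boys 2 q) := by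
        rw [laplacian_eq_sum_pd_pd (contDiff_infty.1 (contDiff_invLap_gaussL hlam) 2)]
        exact Finset.sum_congr rfl fun j _ => hsecond j
    _ = 3 * boys 1 q - 2 * q * boys 2 q := by
        rw [hq, EuclideanSpace.real_norm_sq_eq, Fin.sum_univ_three, Fin.sum_univ_three]
        ring
    _ = exp (-q) := by
        have hrec := boys_recurrence 1 q
        norm_num at hrec
        linarith
    _ = gaussL lam x := by rw [gaussL, neg_div]

theorem pd_invLap_gaussL_eq_radial (hlam : 0 < lam) {x : ℝ³} (hx : x ≠ 0) (j : Fin 3) :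
    pd j (invLap (gaussL lam)) x =
      (x j / ‖x‖) *
        (-(2 * lam / ‖x‖) * exp (-‖x‖ ^ 2 / (4 * lam)) +
          (2 * lam / ‖x‖ ^ 2) * ∫ z in (0 : ℝ)..‖x‖, exp (-z ^ 2 / (4 * lam))) := by
  have hrec := boys_recurrence 0 (‖x‖ ^ 2 / (4 * lam))
  have hscale := mul_boys_zero_mul_sq (4 * lam)⁻¹ ‖x‖
  simp only [neg_mul, inv_mul_eq_div, ← neg_div] at hrec hscale
  have hexp : exp (-‖x‖ ^ 2 / (4 * lam)) = boys 0 (‖x‖ ^ 2 / (4 * lam)) -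
      2 * (‖x‖ ^ 2 / (4 * lam)) * boys 1 (‖x‖ ^ 2 / (4 * lam)) := by
    push_cast at hrec
    linarith
  rw [pd_invLap_gaussL hlam, ← hscale, hexp]
  field_simp
  ring

lemma biotV_eq_smul_sub_gradient (hlam : 0 < lam) (i : Fin 3) :
    biotV lam i = fun x => ((4 * π) ^ (-(3 : ℝ) / 2) * lam ^ (-(3 : ℝ) / 2)) •
      (gaussL lam x • EuclideanSpace.single i 1 - ∇ (pd i (invLap (gaussL lam))) x) := by
  have hu : ContDiff ℝ 2 (invLap (gaussL lam)) := contDiff_infty.1 (contDiff_invLap_gaussL hlam) 2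
  funext x
  rw [biotV]
  congr 2
  ext k
  rw [gradient_apply, pd_comm hu k i]
  fin_cases k <;> rfl

lemma differentiable_gaussL_smul_const (lam : ℝ) (c : ℝ³) :
    Differentiable ℝ fun x => gaussL lam x • c :=
  ((contDiff_gaussL lam).differentiable (by simp)).smul_const c

lemma contDiff_pd_invLap_gaussL (hlam : 0 < lam) (i : Fin 3) :
    ContDiff ℝ 2 (pd i (invLap (gaussL lam))) :=
  contDiff_pd (contDiff_infty.1 (contDiff_invLap_gaussL hlam) 3) (by norm_num) i

theorem curl3_biotV (hlam : 0 < lam) (i : Fin 3) (x : ℝ³) :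
    curl3 (biotV lam i) x = ((4 * π) ^ (-(3 : ℝ) / 2) * lam ^ (-(3 : ℝ) / 2)) •
      curl3 (fun y => gaussL lam y • EuclideanSpace.single i 1) x := by
  have hpd := contDiff_pd_invLap_gaussL hlam i
  rw [biotV_eq_smul_sub_gradient hlam, curl3_const_smul,
    curl3_sub (differentiable_gaussL_smul_const lam _ x) (differentiable_gradient hpd x),
    curl3_gradient hpd, sub_zero]

theorem div3_biotV (hlam : 0 < lam) (i : Fin 3) (x : ℝ³) : div3 (biotV lam i) x = 0 := by
  have hpd := contDiff_pd_invLap_gaussL hlam i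
  have hgauss :
      div3 (fun y => gaussL lam y • EuclideanSpace.single i 1) x = pd i (gaussL lam) x := by
    simp [div3_smul_const]
  have hgrad : div3 (∇ (pd i (invLap (gaussL lam)))) x = pd i (gaussL lam) x := by
    rw [div3_gradient hpd, laplacian_pd (contDiff_infty.1 (contDiff_invLap_gaussL hlam) 3),
      laplacian_invLap_gaussL hlam]
  rw [biotV_eq_smul_sub_gradient hlam, div3_const_smul,
    div3_sub (differentiable_gaussL_smul_const lam _ x) (differentiable_gradient hpd x),
    hgauss, hgrad, sub_self, mul_zero]

theorem biotSavart_gaussian_general (hlam : 0 < lam) (i : Fin 3) :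
    (∀ x, curl3 (biotV lam i) x = ((4 * π) ^ (-(3 : ℝ) / 2) * lam ^ (-(3 : ℝ) / 2)) •
      curl3 (fun y => gaussL lam y • EuclideanSpace.single i 1) x) ∧
    (∀ x, div3 (biotV lam i) x = 0) ∧
    (∀ x, x ≠ 0 → ∀ j, pd j (invLap (gaussL lam)) x =
      (x j / ‖x‖) *
        (-(2 * lam / ‖x‖) * exp (-‖x‖ ^ 2 / (4 * lam)) +
          (2 * lam / ‖x‖ ^ 2) * ∫ z in (0 : ℝ)..‖x‖, exp (-z ^ 2 / (4 * lam)))) :=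
  ⟨curl3_biotV hlam i, div3_biotV hlam i, fun _ hx => pd_invLap_gaussL_eq_radial hlam hx⟩

end BiotSavart

/-- For the divergence-free Gaussian field
`g_i = (4π)^{-3/2}λ^{-3/2}∇×(e^{-|x|²/(4λ)}e_i)`, the field `V_i` satisfies `∇×V_i = g_i`
and `∇·V_i = 0`; moreover `Δ^{-1}e^{-|x|²/(4λ)}` has radial derivative
`∂_r u = -(2λ/r)e^{-r²/(4λ)} + (2λ/r²)∫₀^r e^{-z²/(4λ)}dz` (so that
`∇(Δ^{-1}e^{-|·|²/(4λ)})(x) = (∂_r u)(|x|) x/|x|`), with `λ = 1 + εt`. -/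
theorem biotSavart_gaussian (ε t : ℝ) (hε : 0 ≤ ε) (ht : 0 ≤ t) (i : Fin 3) :
    (∀ x : EuclideanSpace ℝ (Fin 3),
      curl3 (biotV (1 + ε * t) i) x =
        ((4 * π) ^ (-(3 : ℝ) / 2) * (1 + ε * t) ^ (-(3 : ℝ) / 2)) •
          curl3 (fun y => gaussL (1 + ε * t) y • EuclideanSpace.single i 1) x) ∧
    (∀ x : EuclideanSpace ℝ (Fin 3),
      (∑ j : Fin 3, pd j (fun y => biotV (1 + ε * t) i y j) x) = 0) ∧
    (∀ x : EuclideanSpace ℝ (Fin 3), x ≠ 0 → ∀ j : Fin 3,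
      pd j (invLap (gaussL (1 + ε * t))) x =
        (x j / ‖x‖) *
          (-(2 * (1 + ε * t) / ‖x‖) * exp (-‖x‖ ^ 2 / (4 * (1 + ε * t))) +
            (2 * (1 + ε * t) / ‖x‖ ^ 2) *
              ∫ z in (0 : ℝ)..‖x‖, exp (-z ^ 2 / (4 * (1 + ε * t))))) := by
  exact biotSavart_gaussian_general (by positivity) i
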